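/- Let γ>1, δ∈(0,1), τ>0, and ρ̃ := ρ − r(1−γ) > 0, and define f(λ) := γ − (1−δ)·e^{−(ρ̃+λ(1−γ))τ} − ρ̃/λ for λ>0. Then f(λ)→−∞ as λ→0⁺ and f(ρ̃/(γ−1)) = δ > 0; hence there exists at least one λ₂ ∈ (0, ρ̃/(γ−1)) with f(λ₂)=0, and any such λ₂ satisfies the integrability condition ρ̃ + λ₂(1−γ) > 0. -/

import Mathlib

open MeasureTheory

/-!
As `λ → 0⁺` the exponential term stays bounded while `-ρ̃ / λ → -∞`. At `λ = ρ̃ / (γ - 1)` the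
exponent vanishes and `ρ̃ / λ = γ - 1`, so the value is `γ - (1 - δ) - (γ - 1) = δ > 0`. The
intermediate value theorem gives a zero in between, and for `γ > 1` the integrability condition
says precisely that `λ` lies below `ρ̃ / (γ - 1)`.
-/

open Filter Set Topology

section Field

variable {K : Type*} [Field K]

theorem add_div_sub_one_mul_one_sub {γ : K} (hγ : γ ≠ 1) (a : K) :
    a + a / (γ - 1) * (1 - γ) = 0 := by
  rw [← neg_sub γ 1, mul_neg, div_mul_cancel₀ a (sub_ne_zero.2 hγ), add_neg_cancel]

variable [LinearOrder K] [IsStrictOrderedRing K]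

theorem add_mul_one_sub_pos_iff {γ : K} (hγ : 1 < γ) {a x : K} :
    0 < a + x * (1 - γ) ↔ x < a / (γ - 1) := by
  rw [lt_div_iff₀ (sub_pos.2 hγ), ← neg_sub γ 1, mul_neg, ← sub_eq_add_neg, sub_pos]

theorem tendsto_sub_const_div_nhdsGT_zero_atBot [TopologicalSpace K] [OrderTopology K]
    {g : K → K} {a c : K} (ha : 0 < a) (hg : Tendsto g (𝓝[>] 0) (𝓝 c)) :
    Tendsto (fun x ↦ g x - a / x) (𝓝[>] 0) atBot := by
  have hdiv : Tendsto (fun x ↦ a / x) (𝓝[>] 0) atTop := by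
    simpa only [div_eq_mul_inv] using tendsto_inv_nhdsGT_zero.const_mul_atTop ha
  simpa only [sub_eq_add_neg, Function.comp_apply] using
    hg.add_atBot (tendsto_neg_atTop_atBot.comp hdiv)

end Field

/-- The function of `lam` whose positive zeros satisfying `0 < ρt + lam * (1 - γ)` are the constant
propensities to consume out of wealth under quasi-hyperbolic discounting. The parameter `ρt` is
`ρ̃ = ρ - r * (1 - γ)`, through which alone the rates `ρ` and `r` enter. The value at `lam = 0` is
an artefact of division by zero. -/
noncomputable def propensityResidual (γ δ τ ρt lam : ℝ) : ℝ :=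
  γ - (1 - δ) * Real.exp (-(ρt + lam * (1 - γ)) * τ) - ρt / lam

namespace propensityResidual

variable {γ δ τ ρt : ℝ}

theorem continuousOn : ContinuousOn (propensityResidual γ δ τ ρt) {0}ᶜ := by
  unfold propensityResidual
  exact ContinuousOn.sub (by fun_prop) (continuousOn_const.div continuousOn_id fun _ h ↦ h)

theorem tendsto_nhdsGT_zero_atBot (hρt : 0 < ρt) :
    Tendsto (propensityResidual γ δ τ ρt) (𝓝[>] 0) atBot := by
  have hcont : Continuous fun lam ↦ γ - (1 - δ) * Real.exp (-(ρt + lam * (1 - γ)) * τ) := by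
    fun_prop
  exact tendsto_sub_const_div_nhdsGT_zero_atBot hρt hcont.continuousWithinAt

theorem apply_div_sub_one (hγ : γ ≠ 1) (hρt : ρt ≠ 0) :
    propensityResidual γ δ τ ρt (ρt / (γ - 1)) = δ := by
  rw [propensityResidual, add_div_sub_one_mul_one_sub hγ, neg_zero, zero_mul, Real.exp_zero,
    div_div_cancel₀ hρt]
  ring

theorem exists_eq_zero (hγ : 1 < γ) (hδ : 0 < δ) (hρt : 0 < ρt) :
    ∃ lam ∈ Ioo 0 (ρt / (γ - 1)), propensityResidual γ δ τ ρt lam = 0 := by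
  have hend : 0 < ρt / (γ - 1) := div_pos hρt (sub_pos.2 hγ)
  have hval : 0 < propensityResidual γ δ τ ρt (ρt / (γ - 1)) :=
    hδ.trans_eq (apply_div_sub_one hγ.ne' hρt.ne').symm
  have hleft : ContinuousWithinAt (propensityResidual γ δ τ ρt) (Iio (ρt / (γ - 1)))
      (ρt / (γ - 1)) :=
    (continuousOn.continuousAt (isOpen_ne.mem_nhds hend.ne')).continuousWithinAt
  exact isPreconnected_Ioo.intermediate_value_Iio (le_principal_iff.2 (Ioo_mem_nhdsGT hend))
    (le_principal_iff.2 (Ioo_mem_nhdsLT hend)) (continuousOn.mono fun _ h ↦ h.1.ne')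
    (tendsto_nhdsGT_zero_atBot hρt) hleft hval

end propensityResidual

theorem stmt13_general {γ δ ρt : ℝ} (τ : ℝ) (hγ : 1 < γ) (hδ : 0 < δ) (hρt : 0 < ρt) :
    Tendsto (propensityResidual γ δ τ ρt) (𝓝[>] 0) atBot ∧
    propensityResidual γ δ τ ρt (ρt / (γ - 1)) = δ ∧
    (∃ lam ∈ Ioo 0 (ρt / (γ - 1)), propensityResidual γ δ τ ρt lam = 0) ∧
    ∀ lam < ρt / (γ - 1), 0 < ρt + lam * (1 - γ) :=
  ⟨propensityResidual.tendsto_nhdsGT_zero_atBot hρt,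
    propensityResidual.apply_div_sub_one hγ.ne' hρt.ne',
    propensityResidual.exists_eq_zero hγ hδ hρt,
    fun _ ↦ (add_mul_one_sub_pos_iff hγ).2⟩

/-- For the quasi-hyperbolic discount function with `γ > 1`,
`δ ∈ (0,1)`, `τ > 0` and `ρ̃ := ρ − r(1−γ) > 0`, the function
`f(λ) = γ − (1−δ)·e^{−(ρ̃+λ(1−γ))τ} − ρ̃/λ` tends to `−∞` as `λ → 0⁺` and satisfies
`f(ρ̃/(γ−1)) = δ > 0`; hence there is at least one `λ₂ ∈ (0, ρ̃/(γ−1))` with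
`f(λ₂) = 0`, and any such `λ₂` satisfies the integrability condition
`ρ̃ + λ₂(1−γ) > 0`. -/
theorem stmt13
    (γ δ τ ρ r : ℝ) (hγ : 1 < γ)
    (hδ : δ ∈ Set.Ioo (0:ℝ) 1) (hτ : 0 < τ)
    (hρt : 0 < ρ - r * (1 - γ))
    (f : ℝ → ℝ)
    (hf : ∀ lam : ℝ, f lam =
      γ - (1 - δ) * Real.exp (-((ρ - r * (1 - γ)) + lam * (1 - γ)) * τ)
        - (ρ - r * (1 - γ)) / lam) :
    Filter.Tendsto f (nhdsWithin 0 (Set.Ioi 0)) Filter.atBot ∧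
    f ((ρ - r * (1 - γ)) / (γ - 1)) = δ ∧
    (0:ℝ) < δ ∧
    (∃ lam₂ ∈ Set.Ioo (0:ℝ) ((ρ - r * (1 - γ)) / (γ - 1)), f lam₂ = 0) ∧
    ∀ lam₂ ∈ Set.Ioo (0:ℝ) ((ρ - r * (1 - γ)) / (γ - 1)), f lam₂ = 0 →
      0 < (ρ - r * (1 - γ)) + lam₂ * (1 - γ) := by
  obtain rfl : f = propensityResidual γ δ τ (ρ - r * (1 - γ)) := funext hf
  obtain ⟨hlim, hval, hzero, hint⟩ := stmt13_general τ hγ hδ.1 hρt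
  exact ⟨hlim, hval, hδ.1, hzero, fun lam₂ hlam₂ _ ↦ hint lam₂ hlam₂.2⟩
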